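/- Let 1 < ρ < 2. There exists a constant M₃ > 0, depending only on ρ, such that for every x > 0, x^{ρ−1} · |E_{ρ,ρ}(−x^ρ)| ≤ M₃/(1 + x). Equivalently, the derivative of x ↦ E_ρ(−x^ρ) satisfies |d/dx E_ρ(−x^ρ)| ≤ M₃/(1 + x) for all x > 0. -/

import Mathlib

/-!
Put `g(x) = x · x^(ρ-1) E_{ρ,ρ}(-x^ρ) = ∑ (-1)^k x^(ρ(k+1)) / Γ(ρ(k+1))` (`mlSum`). On `(0, 1]` the
estimate is read off the power series (`exists_bound_small`), so what has to be shown is that `g`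
is bounded on `[1, ∞)`.

Integrating termwise, the Laplace transform of `g` on `Re s > 1` is
`K(s) = ρ s^(ρ-1) / (s^ρ + 1)^2` (`laplace_mlSum`); this is minus the derivative of `1 / (s^ρ + 1)`.
For `Re s > 0` the argument of `s^ρ` is at most `ρπ/2 < π` in absolute value, so `s^ρ` stays in a
closed sector avoiding `-1`: `K` has no pole in the right half plane, and since it decays like
`|s|^(-ρ-1)` with `ρ > 1` it satisfies `|K(s)| ≤ C / (1 + (Im s)^2)` there
(`exists_norm_laplaceKernel_le`).

Fourier inversion on the line `Re s = 2` gives `g(x) = (2π)⁻¹ ∫ e^{(2+iy)x} K(2+iy) dy`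
(`mlSum_eq_integral`). By Cauchy's theorem the line may be moved to `Re s = 1/x` (`rect_shift`),
where `|e^{sx}| = e`, and hence `|g(x)| ≤ (2π)⁻¹ e C π` (`exists_abs_mlSum_le`).
-/

/-- The two-parametric Mittag-Leffler function `E_{ρ,ρ}(x) = ∑ x^k / Γ(ρ(k+1))`. -/
noncomputable def mittagLeffler2 (ρ x : ℝ) : ℝ :=
  ∑' k : ℕ, x ^ k / Real.Gamma (ρ * (k + 1))

open MeasureTheory Set Filter Topology

/-! ### Laplace transform of a power -/

theorem integrableOn_rpow_mul_exp {a r : ℝ} (ha : 0 < a) (hr : 0 < r) :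
    IntegrableOn (fun t : ℝ => t ^ (a - 1) * Real.exp (-(r * t))) (Ioi 0) := by
  have := integrableOn_rpow_mul_exp_neg_mul_rpow (s := a - 1) (p := 1) (by linarith) one_pos hr
  simpa using this

/-- Mathlib has this formula for real `s`. Both sides are holomorphic on the right half plane, the left
side being the complex moment generating function at `-s` of the measure with density `t ^ (a - 1)`
on `(0, ∞)`, so the identity theorem extends it to complex `s`. -/
theorem laplace_rpow {a : ℝ} (ha : 0 < a) {s : ℂ} (hs : 0 < s.re) :
    ∫ t in Ioi (0 : ℝ), ((t ^ (a - 1) : ℝ) : ℂ) * Complex.exp (-(s * t)) =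
      s ^ (-a : ℂ) * Real.Gamma a := by
  set μ : Measure ℝ :=
    (volume.restrict (Ioi 0)).withDensity (fun t => ENNReal.ofReal (t ^ (a - 1))) with hμ
  have hmeas : Measurable fun t : ℝ => ENNReal.ofReal (t ^ (a - 1)) := by fun_prop
  have hlt : ∀ᵐ t ∂(volume.restrict (Ioi (0 : ℝ))), ENNReal.ofReal (t ^ (a - 1)) < ⊤ :=
    ae_of_all _ fun t => ENNReal.ofReal_lt_top
  have hset : Iio (0 : ℝ) ⊆ interior (ProbabilityTheory.integrableExpSet id μ) := by
    refine interior_maximal (fun r hr => ?_) isOpen_Iio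
    change Integrable _ μ
    rw [hμ, integrable_withDensity_iff_integrable_smul' hmeas hlt]
    refine (integrableOn_rpow_mul_exp ha (neg_pos.2 hr)).congr_fun (fun t ht => ?_)
      measurableSet_Ioi
    have : 0 ≤ t ^ (a - 1) := Real.rpow_nonneg (le_of_lt ht) _
    simp [ENNReal.toReal_ofReal this]
  have hL : ∀ z : ℂ, ProbabilityTheory.complexMGF id μ (-z) =
      ∫ t in Ioi (0 : ℝ), ((t ^ (a - 1) : ℝ) : ℂ) * Complex.exp (-(z * t)) := by
    intro z
    rw [ProbabilityTheory.complexMGF, hμ, integral_withDensity_eq_integral_toReal_smul hmeas hlt]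
    refine setIntegral_congr_fun measurableSet_Ioi fun t ht => ?_
    have : 0 ≤ t ^ (a - 1) := Real.rpow_nonneg (le_of_lt ht) _
    simp [ENNReal.toReal_ofReal this]
  have hopen : IsOpen {z : ℂ | 0 < z.re} := isOpen_lt continuous_const Complex.continuous_re
  have h1 : AnalyticOnNhd ℂ (fun z => ProbabilityTheory.complexMGF id μ (-z))
      {z : ℂ | 0 < z.re} := by
    refine DifferentiableOn.analyticOnNhd (fun z hz => ?_) hopen
    have : (-z).re ∈ interior (ProbabilityTheory.integrableExpSet id μ) :=
      hset (by simpa using hz)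
    exact ((ProbabilityTheory.hasDerivAt_complexMGF this).differentiableAt.comp z
      differentiableAt_id.neg).differentiableWithinAt
  have h2 : AnalyticOnNhd ℂ (fun z : ℂ => z ^ (-a : ℂ) * Real.Gamma a) {z : ℂ | 0 < z.re} := by
    refine DifferentiableOn.analyticOnNhd (fun z hz => ?_) hopen
    exact ((differentiableAt_id.cpow_const (Or.inl hz)).mul_const _).differentiableWithinAt
  have hconn : IsPreconnected {z : ℂ | 0 < z.re} :=
    (convex_halfSpace_re_gt 0).isPreconnected
  -- The real points accumulate at `1`.
  have hfreq : ∃ᶠ z in 𝓝[≠] (1 : ℂ), ProbabilityTheory.complexMGF id μ (-z) =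
      z ^ (-a : ℂ) * Real.Gamma a := by
    have ht : Tendsto (fun r : ℝ => (r : ℂ)) (𝓝[≠] 1) (𝓝[≠] 1) := by
      refine tendsto_nhdsWithin_iff.2 ⟨?_, ?_⟩
      · exact (Complex.continuous_ofReal.tendsto' 1 1 (by simp)).mono_left nhdsWithin_le_nhds
      · filter_upwards [self_mem_nhdsWithin] with r hr
        simpa using hr
    refine ht.frequently (Eventually.frequently ?_)
    filter_upwards [nhdsWithin_le_nhds (Ioi_mem_nhds one_pos)] with r (hr : (0 : ℝ) < r)
    rw [hL]
    have := Real.integral_rpow_mul_exp_neg_mul_Ioi ha hr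
    rw [one_div, Real.inv_rpow hr.le, ← Real.rpow_neg hr.le] at this
    rw [← Complex.ofReal_neg, ← Complex.ofReal_cpow hr.le, ← Complex.ofReal_mul, ← this,
      ← integral_complex_ofReal]
    push_cast
    rfl
  rw [← hL]
  exact h1.eqOn_of_preconnected_of_frequently_eq h2 hconn (by simp) hfreq hs

/-! ### Shifting a vertical line of integration -/

/-- Cauchy's theorem on the rectangle with vertices `a ± iT`, `b ± iT`; the horizontal sides vanish as
`T → ∞` by the decay assumption. -/
theorem rect_shift {F : ℂ → ℂ} {a b C : ℝ} (hab : a ≤ b)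
    (hF : DifferentiableOn ℂ F {s | a ≤ s.re})
    (hC : ∀ s : ℂ, a ≤ s.re → s.re ≤ b → ‖F s‖ ≤ C * (1 + s.im ^ 2)⁻¹) :
    ∫ y : ℝ, F (a + y * Complex.I) = ∫ y : ℝ, F (b + y * Complex.I) := by
  have hint : ∀ σ : ℝ, a ≤ σ → σ ≤ b → Integrable fun y : ℝ => F (σ + y * Complex.I) := by
    intro σ h1 h2
    refine (integrable_inv_one_add_sq.const_mul C).mono' ?_ (ae_of_all _ fun y => ?_)
    · refine Continuous.aestronglyMeasurable ?_
      refine hF.continuousOn.comp_continuous (by fun_prop) fun y => ?_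
      simpa using h1
    · simpa using hC (σ + y * Complex.I) (by simpa using h1) (by simpa using h2)
  have key : ∀ T : ℝ, ‖(∫ y in (-T)..T, F (b + y * Complex.I)) -
      ∫ y in (-T)..T, F (a + y * Complex.I)‖ ≤ 2 * (C * (1 + T ^ 2)⁻¹ * |b - a|) := by
    intro T
    have H := Complex.integral_boundary_rect_eq_zero_of_differentiableOn F
      (a + (-T : ℝ) * Complex.I) (b + T * Complex.I) (hF.mono ?_)
    · simp only [Complex.add_re, Complex.ofReal_re, Complex.mul_re, Complex.I_re, mul_zero,
        Complex.ofReal_im, Complex.I_im, mul_one, sub_self, add_zero, Complex.add_im,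
        Complex.mul_im, zero_add, smul_eq_mul] at H
      have hb : ∀ τ : ℝ, τ ^ 2 = T ^ 2 →
          ‖∫ x in a..b, F (x + τ * Complex.I)‖ ≤ C * (1 + T ^ 2)⁻¹ * |b - a| := by
        intro τ hτ
        refine intervalIntegral.norm_integral_le_of_norm_le_const fun x hx => ?_
        rw [uIoc_of_le hab] at hx
        simpa [hτ] using hC (x + τ * Complex.I) (by simpa using hx.1.le) (by simpa using hx.2)
      have e : Complex.I * ((∫ y in (-T)..T, F (b + y * Complex.I)) -
          ∫ y in (-T)..T, F (a + y * Complex.I)) =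
          (∫ x in a..b, F (x + T * Complex.I)) - ∫ x in a..b, F (x + (-T : ℝ) * Complex.I) := by
        linear_combination H
      have := congrArg norm e
      rw [norm_mul, Complex.norm_I, one_mul] at this
      rw [this]
      refine (norm_sub_le _ _).trans ?_
      linarith [hb T rfl, hb (-T) (by ring)]
    · intro s hs
      have := hs.1
      simp [uIcc_of_le hab] at this
      exact this.1
  have h0 : Tendsto (fun T : ℝ => 2 * (C * (1 + T ^ 2)⁻¹ * |b - a|)) atTop (𝓝 0) := by
    have : Tendsto (fun T : ℝ => (1 + T ^ 2)⁻¹) atTop (𝓝 0) :=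
      tendsto_inv_atTop_zero.comp (tendsto_atTop_add_const_left _ _ (tendsto_pow_atTop two_ne_zero))
    simpa using ((this.const_mul C).mul_const |b - a|).const_mul 2
  have hl := (intervalIntegral_tendsto_integral (hint b hab le_rfl) tendsto_neg_atTop_atBot
    tendsto_id).sub (intervalIntegral_tendsto_integral (hint a le_rfl hab) tendsto_neg_atTop_atBot
    tendsto_id)
  have := tendsto_nhds_unique hl (squeeze_zero_norm key h0)
  exact (sub_eq_zero.1 this).symm

/-! ### The transform in the right half plane -/

theorem rpow_le_one_add_rpow {r p q : ℝ} (hr : 0 ≤ r) (hp : 0 ≤ p) (hpq : p ≤ q) :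
    r ^ p ≤ 1 + r ^ q := by
  have hq : 0 ≤ r ^ q := Real.rpow_nonneg hr q
  rcases le_total r 1 with h | h
  · linarith [Real.rpow_le_one hr h hp]
  · linarith [Real.rpow_le_rpow_of_exponent_le h hpq]

/-- On the right half plane `Re (s ^ ρ) ≥ ‖s‖ ^ ρ * cos (ρπ/2)`, where `cos (ρπ/2) > -1`; this keeps
`s ^ ρ` uniformly away from `-1`. -/
theorem norm_cpow_add_one_sq_ge {ρ : ℝ} (hρ₁ : 1 < ρ) (hρ₂ : ρ < 2) {s : ℂ} (hs : 0 < s.re) :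
    (1 + Real.cos (ρ * (Real.pi / 2))) / 2 * (1 + ‖s‖ ^ ρ) ^ 2 ≤ ‖s ^ (ρ : ℂ) + 1‖ ^ 2 := by
  have hs0 : s ≠ 0 := by rintro rfl; simp at hs
  have hπ := Real.pi_pos
  have hn : ‖s ^ (ρ : ℂ)‖ = ‖s‖ ^ ρ := by simp [Complex.norm_cpow_of_ne_zero hs0]
  have hre : (s ^ (ρ : ℂ)).re = ‖s‖ ^ ρ * Real.cos (s.arg * ρ) := Complex.cpow_ofReal_re s ρ
  have hcos : Real.cos (ρ * (Real.pi / 2)) ≤ Real.cos (s.arg * ρ) := by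
    rw [← Real.cos_abs (s.arg * ρ)]
    refine Real.cos_le_cos_of_nonneg_of_le_pi (abs_nonneg _) (by nlinarith) ?_
    rw [abs_mul, abs_of_pos (by linarith : 0 < ρ), mul_comm]
    gcongr
    exact (Complex.abs_arg_lt_pi_div_two_iff.2 (Or.inl hs)).le
  have hr : 0 ≤ ‖s‖ ^ ρ := by positivity
  have e : ‖s ^ (ρ : ℂ) + 1‖ ^ 2 = (‖s‖ ^ ρ) ^ 2 + 1 + 2 * (‖s‖ ^ ρ * Real.cos (s.arg * ρ)) := by
    rw [← hre, ← hn, ← Complex.normSq_eq_norm_sq, ← Complex.normSq_eq_norm_sq,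
      Complex.normSq_add]
    simp
  rw [e]
  nlinarith [mul_le_mul_of_nonneg_left hcos hr, Real.cos_le_one (ρ * (Real.pi / 2)),
    mul_nonneg (sub_nonneg.2 (Real.cos_le_one (ρ * (Real.pi / 2)))) (sq_nonneg (1 - ‖s‖ ^ ρ))]

theorem one_add_cos_pos {ρ : ℝ} (hρ₁ : 1 < ρ) (hρ₂ : ρ < 2) :
    0 < (1 + Real.cos (ρ * (Real.pi / 2))) / 2 := by
  have hπ := Real.pi_pos
  have : Real.cos Real.pi < Real.cos (ρ * (Real.pi / 2)) :=
    Real.cos_lt_cos_of_nonneg_of_le_pi (by positivity) le_rfl (by nlinarith)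
  rw [Real.cos_pi] at this
  linarith

/-- The function `ρ s^(ρ-1) / (s^ρ + 1)^2`, with principal branches of the powers: the Laplace
transform of `mlSum ρ`. -/
noncomputable def laplaceKernel (ρ : ℝ) (s : ℂ) : ℂ :=
  ρ * s ^ ((ρ - 1 : ℝ) : ℂ) / (s ^ (ρ : ℂ) + 1) ^ 2

theorem cpow_add_one_ne_zero {ρ : ℝ} (hρ₁ : 1 < ρ) (hρ₂ : ρ < 2) {s : ℂ} (hs : 0 < s.re) :
    s ^ (ρ : ℂ) + 1 ≠ 0 := by
  intro h
  have := norm_cpow_add_one_sq_ge hρ₁ hρ₂ hs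
  have h2 := one_add_cos_pos hρ₁ hρ₂
  rw [h, norm_zero] at this
  have : 0 < (1 + Real.cos (ρ * (Real.pi / 2))) / 2 * (1 + ‖s‖ ^ ρ) ^ 2 := by positivity
  linarith

theorem laplaceKernel_differentiableOn {ρ : ℝ} (hρ₁ : 1 < ρ) (hρ₂ : ρ < 2) :
    DifferentiableOn ℂ (laplaceKernel ρ) {s | 0 < s.re} := by
  intro s hs
  refine DifferentiableAt.differentiableWithinAt ?_
  have h : ∀ c : ℂ, DifferentiableAt ℂ (fun z : ℂ => z ^ c) s := fun c =>
    differentiableAt_id.cpow_const (Or.inl hs)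
  exact ((h _).const_mul _).div (((h _).add_const _).pow 2)
    (pow_ne_zero 2 (cpow_add_one_ne_zero hρ₁ hρ₂ hs))

theorem exists_norm_laplaceKernel_le {ρ : ℝ} (hρ₁ : 1 < ρ) (hρ₂ : ρ < 2) :
    ∃ C : ℝ, 0 < C ∧ ∀ s : ℂ, 0 < s.re → ‖laplaceKernel ρ s‖ ≤ C * (1 + s.im ^ 2)⁻¹ := by
  have hδ := one_add_cos_pos hρ₁ hρ₂
  set δ := (1 + Real.cos (ρ * (Real.pi / 2))) / 2 with hδd
  refine ⟨2 * ρ / δ, by positivity, fun s hs => ?_⟩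
  have hs0 : s ≠ 0 := by rintro rfl; simp at hs
  have h1 := norm_cpow_add_one_sq_ge hρ₁ hρ₂ hs
  rw [← hδd] at h1
  have hr0 : 0 < ‖s‖ := norm_pos_iff.2 hs0
  have him : s.im ^ 2 ≤ ‖s‖ ^ 2 := by
    rw [← sq_abs s.im]
    gcongr
    exact Complex.abs_im_le_norm s
  have hn : ‖laplaceKernel ρ s‖ = ρ * ‖s‖ ^ (ρ - 1) / ‖s ^ (ρ : ℂ) + 1‖ ^ 2 := by
    rw [laplaceKernel, norm_div, norm_mul, norm_pow, Complex.norm_cpow_of_ne_zero hs0,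
      Complex.norm_real, Real.norm_of_nonneg (by linarith)]
    simp
  have hA : ‖s‖ ^ (ρ - 1) ≤ 1 + ‖s‖ ^ ρ :=
    rpow_le_one_add_rpow hr0.le (by linarith) (by linarith)
  have hB : ‖s‖ ^ (ρ - 1) * ‖s‖ ^ 2 ≤ 1 + (‖s‖ ^ ρ) ^ 2 := by
    rw [← Real.rpow_natCast (‖s‖ ^ ρ), ← Real.rpow_mul hr0.le, ← Real.rpow_natCast ‖s‖,
      ← Real.rpow_add hr0]
    exact rpow_le_one_add_rpow hr0.le (by push_cast; linarith) (by push_cast; linarith)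
  have hC : ‖s‖ ^ (ρ - 1) * (1 + s.im ^ 2) ≤ 2 * (1 + ‖s‖ ^ ρ) ^ 2 := by
    have : 0 ≤ ‖s‖ ^ (ρ - 1) := by positivity
    have : 0 ≤ ‖s‖ ^ ρ := by positivity
    nlinarith
  rw [hn, ← div_eq_mul_inv, div_div]
  have hpos : 0 < δ * (1 + ‖s‖ ^ ρ) ^ 2 := by positivity
  rw [div_le_div_iff₀ (hpos.trans_le h1) (by positivity)]
  calc ρ * ‖s‖ ^ (ρ - 1) * (δ * (1 + s.im ^ 2))
      = ρ * δ * (‖s‖ ^ (ρ - 1) * (1 + s.im ^ 2)) := by ring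
    _ ≤ ρ * δ * (2 * (1 + ‖s‖ ^ ρ) ^ 2) := by gcongr
    _ = 2 * ρ * (δ * (1 + ‖s‖ ^ ρ) ^ 2) := by ring
    _ ≤ 2 * ρ * ‖s ^ (ρ : ℂ) + 1‖ ^ 2 := by gcongr

/-! ### The power series -/

/-- Since `R` is arbitrary, this says that `Γ` grows faster than any exponential. -/
theorem rpow_mul_exp_le_Gamma {a R : ℝ} (ha : 0 < a) (hR : 0 < R) :
    R ^ a * Real.exp (-(R + 1)) ≤ Real.Gamma (a + 1) := by
  rw [Real.Gamma_eq_integral (by linarith)]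
  have hint := Real.GammaIntegral_convergent (s := a + 1) (by linarith)
  simp only [add_sub_cancel_right] at hint ⊢
  have hsub : Ioc R (R + 1) ⊆ Ioi 0 := fun t ht => hR.trans ht.1
  calc R ^ a * Real.exp (-(R + 1)) = ∫ t in Ioc R (R + 1), R ^ a * Real.exp (-(R + 1)) := by
        simp
    _ ≤ ∫ t in Ioc R (R + 1), Real.exp (-t) * t ^ a := by
        refine setIntegral_mono_on (integrableOn_const (by simp)) (hint.mono_set hsub) measurableSet_Ioc
          fun t ht => ?_
        rw [mul_comm]
        gcongr
        · exact ht.2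
        · exact ht.1.le
    _ ≤ ∫ t in Ioi 0, Real.exp (-t) * t ^ a := by
        refine setIntegral_mono_set hint ?_ hsub.eventuallyLE
        filter_upwards [ae_restrict_mem measurableSet_Ioi] with t ht
        have : 0 ≤ t ^ a := Real.rpow_nonneg (le_of_lt ht) _
        positivity

theorem summable_mul_rpow {ρ c : ℝ} (hρ : 1 < ρ) (hc : 1 < c) :
    Summable fun k : ℕ => ρ * (k + 1) * c ^ (-(ρ * (k + 1))) := by
  have hc0 : 0 < c := by linarith
  have hq : ‖c ^ (-ρ)‖ < 1 := by
    rw [Real.norm_of_nonneg (by positivity)]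
    exact Real.rpow_lt_one_of_one_lt_of_neg hc (by linarith)
  have h0 : Summable fun n : ℕ => (n : ℝ) ^ 1 * (c ^ (-ρ)) ^ n :=
    summable_pow_mul_geometric_of_norm_lt_one 1 hq
  have h := ((summable_nat_add_iff 1).2 h0).mul_left ρ
  refine h.congr fun k => ?_
  have e : c ^ (-(ρ * (k + 1))) = (c ^ (-ρ)) ^ (k + 1) := by
    rw [← Real.rpow_natCast (c ^ (-ρ)), ← Real.rpow_mul hc0.le, neg_mul]
    push_cast
    ring
  rw [e]
  push_cast
  ring

/-- The `k`-th term `(-1)^k x^(ρ(k+1)) / Γ(ρ(k+1))` of the series for `x^ρ E_{ρ,ρ}(-x^ρ)`. -/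
noncomputable def mlTerm (ρ : ℝ) (k : ℕ) (x : ℝ) : ℝ :=
  (-1) ^ k * x ^ (ρ * (k + 1)) / Real.Gamma (ρ * (k + 1))

theorem abs_mlTerm {ρ : ℝ} (hρ : 1 < ρ) (k : ℕ) {x : ℝ} (hx : 0 ≤ x) :
    |mlTerm ρ k x| = x ^ (ρ * (k + 1)) / Real.Gamma (ρ * (k + 1)) := by
  have hG : 0 < Real.Gamma (ρ * (k + 1)) := Real.Gamma_pos_of_pos (by positivity)
  rw [mlTerm, abs_div, abs_mul, abs_of_pos hG, abs_of_nonneg (Real.rpow_nonneg hx _)]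
  simp

theorem abs_mlTerm_le {ρ : ℝ} (hρ : 1 < ρ) (k : ℕ) {x X : ℝ} (hx : 0 ≤ x) (hX : 0 < X)
    (hxX : x ≤ X) :
    |mlTerm ρ k x| ≤ Real.exp (2 * X + 1) * (ρ * (k + 1) * 2 ^ (-(ρ * (k + 1)))) := by
  rw [abs_mlTerm hρ k hx]
  have ha : 0 < ρ * (k + 1) := by positivity
  set a := ρ * (k + 1)
  have hG : 0 < Real.Gamma a := Real.Gamma_pos_of_pos ha
  -- Taking `R = 2X` gains the factor `2 ^ (-a)` that makes the bound summable.
  have h := rpow_mul_exp_le_Gamma ha (R := 2 * X) (by positivity)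
  rw [Real.Gamma_add_one ha.ne', Real.mul_rpow (by norm_num) hX.le, Real.exp_neg] at h
  rw [div_le_iff₀ hG, Real.rpow_neg (by norm_num)]
  have h3 : x ^ a ≤ X ^ a := by gcongr
  have h2 : (0 : ℝ) < 2 ^ a := by positivity
  have he := Real.exp_pos (2 * X + 1)
  calc x ^ a ≤ X ^ a := h3
    _ = Real.exp (2 * X + 1) * (2 ^ a)⁻¹ * (2 ^ a * X ^ a * (Real.exp (2 * X + 1))⁻¹) := by
        field_simp
    _ ≤ Real.exp (2 * X + 1) * (2 ^ a)⁻¹ * (a * Real.Gamma a) := by gcongr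
    _ = _ := by ring

/-- The function `x^ρ E_{ρ,ρ}(-x^ρ)` on `(0, ∞)`, as the sum of its series in powers of `x^ρ`. -/
noncomputable def mlSum (ρ x : ℝ) : ℝ := ∑' k : ℕ, mlTerm ρ k x

theorem mlSum_continuousAt {ρ : ℝ} (hρ : 1 < ρ) {x : ℝ} (hx : 0 < x) :
    ContinuousAt (mlSum ρ) x := by
  have hon : ContinuousOn (mlSum ρ) (Ioo 0 (x + 1)) := by
    refine continuousOn_tsum (fun k => ?_)
      ((summable_mul_rpow hρ one_lt_two).mul_left (Real.exp (2 * (x + 1) + 1)))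
      fun k y hy => abs_mlTerm_le hρ k hy.1.le (by linarith) hy.2.le
    refine (continuousOn_const.mul ?_).div_const _
    exact continuousOn_id.rpow_const fun y hy => Or.inl hy.1.ne'
  exact hon.continuousAt (Ioo_mem_nhds hx (by linarith))

theorem mlSum_eq {ρ : ℝ} {x : ℝ} (hx : 0 < x) :
    mlSum ρ x = x * (x ^ (ρ - 1) * mittagLeffler2 ρ (-(x ^ ρ))) := by
  have : x * x ^ (ρ - 1) = x ^ ρ := by
    rw [Real.rpow_sub_one hx.ne']
    field_simp
  rw [← mul_assoc, this, mittagLeffler2, ← tsum_mul_left, mlSum]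
  refine tsum_congr fun k => ?_
  rw [mlTerm, neg_pow (x ^ ρ), ← Real.rpow_natCast (x ^ ρ), ← Real.rpow_mul hx.le, mul_add, mul_one,
    Real.rpow_add hx]
  ring

theorem exists_bound_small {ρ : ℝ} (hρ : 1 < ρ) : ∃ B : ℝ, 0 ≤ B ∧ ∀ x : ℝ, 0 < x → x ≤ 1 →
    x ^ (ρ - 1) * |mittagLeffler2 ρ (-(x ^ ρ))| ≤ B := by
  have hG : ∀ k : ℕ, 0 < Real.Gamma (ρ * (k + 1)) := fun k =>
    Real.Gamma_pos_of_pos (by positivity)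
  have hs : Summable fun k : ℕ => 1 / Real.Gamma (ρ * (k + 1)) := by
    refine Summable.of_nonneg_of_le (fun k => (one_div_pos.2 (hG k)).le) (fun k => ?_)
      ((summable_mul_rpow hρ one_lt_two).mul_left (Real.exp (2 * 1 + 1)))
    have := abs_mlTerm_le hρ k zero_le_one one_pos le_rfl
    rwa [abs_mlTerm hρ k zero_le_one, Real.one_rpow] at this
  refine ⟨∑' k : ℕ, 1 / Real.Gamma (ρ * (k + 1)),
    tsum_nonneg fun k => (one_div_pos.2 (hG k)).le, fun x hx hx1 => ?_⟩
  have h1 : |mittagLeffler2 ρ (-(x ^ ρ))| ≤ ∑' k : ℕ, 1 / Real.Gamma (ρ * (k + 1)) := by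
    rw [← Real.norm_eq_abs, mittagLeffler2]
    refine tsum_of_norm_bounded hs.hasSum fun k => ?_
    rw [norm_div, norm_pow, norm_neg, Real.norm_of_nonneg (hG k).le,
      Real.norm_of_nonneg (by positivity)]
    have := hG k
    gcongr
    exact pow_le_one₀ (by positivity) (Real.rpow_le_one hx.le hx1 (by linarith))
  have h2 : x ^ (ρ - 1) ≤ 1 := Real.rpow_le_one hx.le hx1 (by linarith)
  calc _ ≤ 1 * |mittagLeffler2 ρ (-(x ^ ρ))| := by gcongr
    _ ≤ _ := by rwa [one_mul]

/-! ### Laplace transform of the series -/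

/-- The differentiated geometric series in `-s ^ (-ρ)`; it converges because `‖s‖ > 1`. -/
theorem hasSum_laplaceKernel {ρ : ℝ} (hρ₁ : 1 < ρ) {s : ℂ} (hs : 1 < s.re) :
    HasSum (fun k : ℕ => (-1) ^ k * ((ρ * (k + 1) : ℝ) : ℂ) *
      s ^ (-((ρ * (k + 1) + 1 : ℝ) : ℂ))) (laplaceKernel ρ s) := by
  have hs0 : s ≠ 0 := by rintro rfl; simp at hs; linarith
  have hn1 : 1 < ‖s‖ := hs.trans_le (Complex.re_le_norm s)
  have hnorm : ‖s ^ (-(ρ : ℂ))‖ < 1 := by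
    rw [Complex.norm_cpow_of_ne_zero hs0]
    simpa using Real.rpow_lt_one_of_one_lt_of_neg hn1 (by linarith : -ρ < 0)
  -- `∑ (n + 1) r ^ n = 1 / (1 - r) ^ 2`.
  have h := (hasSum_choose_mul_geometric_of_norm_lt_one (𝕜 := ℂ) 1
    (r := -s ^ (-(ρ : ℂ))) (by rwa [norm_neg])).mul_left ((ρ : ℂ) * s ^ (-(ρ : ℂ) - 1))
  convert! h using 1
  · funext k
    have : s ^ (-((ρ * (k + 1) + 1 : ℝ) : ℂ)) = s ^ (-(ρ : ℂ) - 1) * (s ^ (-(ρ : ℂ))) ^ k := by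
      rw [← Complex.cpow_mul_nat, ← Complex.cpow_add _ _ hs0]
      push_cast
      ring_nf
    rw [this, neg_pow (s ^ (-(ρ : ℂ)))]
    push_cast [Nat.choose_one_right]
    ring
  · have h0 : s ^ (ρ : ℂ) ≠ 0 := by simp [Complex.cpow_eq_zero_iff, hs0]
    have e1 : s ^ (-(ρ : ℂ) - 1) = (s ^ (ρ : ℂ))⁻¹ * s⁻¹ := by
      rw [Complex.cpow_sub _ _ hs0, Complex.cpow_neg, Complex.cpow_one, div_eq_mul_inv]
    have e2 : s ^ ((ρ - 1 : ℝ) : ℂ) = s ^ (ρ : ℂ) * s⁻¹ := by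
      push_cast
      rw [Complex.cpow_sub _ _ hs0, Complex.cpow_one, div_eq_mul_inv]
    have hne : (s ^ (ρ : ℂ)) + 1 ≠ 0 := by
      intro h
      have h3 : s ^ (-(ρ : ℂ)) = -1 := by
        rw [Complex.cpow_neg, eq_neg_of_add_eq_zero_left h]; norm_num
      rw [h3] at hnorm
      simp at hnorm
    rw [laplaceKernel, e1, e2, Complex.cpow_neg]
    have e3 : 1 - -(s ^ (ρ : ℂ))⁻¹ = (s ^ (ρ : ℂ) + 1) / s ^ (ρ : ℂ) := by
      field_simp
      ring
    rw [e3, one_add_one_eq_two, div_pow]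
    field_simp

theorem laplace_mlSum {ρ : ℝ} (hρ₁ : 1 < ρ) (hρ₂ : ρ < 2) {s : ℂ} (hs : 1 < s.re) :
    IntegrableOn (fun t : ℝ => (mlSum ρ t : ℂ) * Complex.exp (-(s * t))) (Ioi 0) ∧
    ∫ t in Ioi (0 : ℝ), (mlSum ρ t : ℂ) * Complex.exp (-(s * t)) = laplaceKernel ρ s := by
  have hs0 : 0 < s.re := by linarith
  have ha : ∀ k : ℕ, 0 < ρ * (k + 1) := fun k => by positivity
  have hG : ∀ k : ℕ, 0 < Real.Gamma (ρ * (k + 1)) := fun k => Real.Gamma_pos_of_pos (ha k)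
  set F : ℕ → ℝ → ℂ := fun k t => (mlTerm ρ k t : ℂ) * Complex.exp (-(s * t)) with hF
  have hnorm : ∀ k, ∀ t ∈ Ioi (0 : ℝ), ‖F k t‖ = (Real.Gamma (ρ * (k + 1)))⁻¹ *
      (t ^ ((ρ * (k + 1) + 1) - 1) * Real.exp (-(s.re * t))) := by
    intro k t ht
    rw [hF, norm_mul, Complex.norm_real, Real.norm_eq_abs, abs_mlTerm hρ₁ k (le_of_lt ht),
      Complex.norm_exp]
    simp [div_eq_mul_inv]
    ring
  have hFint : ∀ k, Integrable (F k) (volume.restrict (Ioi 0)) := by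
    intro k
    refine ((integrableOn_rpow_mul_exp (a := ρ * (k + 1) + 1) (by linarith [ha k])
      hs0).const_mul (Real.Gamma (ρ * (k + 1)))⁻¹).mono' ?_ ?_
    · refine Measurable.aestronglyMeasurable ?_
      simp only [hF, mlTerm]
      fun_prop
    · filter_upwards [ae_restrict_mem measurableSet_Ioi] with t ht
      exact (hnorm k t ht).le
  have hnint : ∀ k, ∫ t in Ioi (0 : ℝ), ‖F k t‖ = s.re⁻¹ * (ρ * (k + 1) *
      s.re ^ (-(ρ * (k + 1)))) := by
    intro k
    rw [setIntegral_congr_fun measurableSet_Ioi (hnorm k), integral_const_mul,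
      Real.integral_rpow_mul_exp_neg_mul_Ioi (by linarith [ha k]) hs0,
      Real.Gamma_add_one (ha k).ne', one_div, Real.inv_rpow hs0.le, Real.rpow_add_one hs0.ne',
      Real.rpow_neg hs0.le]
    have := (hG k).ne'
    field_simp
  have hsum : Summable fun k => ∫ t in Ioi (0 : ℝ), ‖F k t‖ := by
    simp_rw [hnint]
    exact (summable_mul_rpow hρ₁ hs).mul_left _
  have htsum : ∀ t : ℝ, ∑' k, F k t = (mlSum ρ t : ℂ) * Complex.exp (-(s * t)) := by
    intro t
    rw [hF, tsum_mul_right, mlSum, Complex.ofReal_tsum]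
  have hval : ∀ k, ∫ t in Ioi (0 : ℝ), F k t = (-1) ^ k * ((ρ * (k + 1) : ℝ) : ℂ) *
      s ^ (-((ρ * (k + 1) + 1 : ℝ) : ℂ)) := by
    intro k
    have h := laplace_rpow (a := ρ * (k + 1) + 1) (by linarith [ha k]) hs0
    rw [Real.Gamma_add_one (ha k).ne'] at h
    have e : ∀ t : ℝ, F k t = ((-1) ^ k * ((Real.Gamma (ρ * (k + 1)) : ℝ) : ℂ)⁻¹) *
        (((t ^ ((ρ * (k + 1) + 1) - 1) : ℝ) : ℂ) * Complex.exp (-(s * t))) := by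
      intro t
      simp only [hF, mlTerm, add_sub_cancel_right]
      rw [Complex.ofReal_div, Complex.ofReal_mul, Complex.ofReal_pow, Complex.ofReal_neg,
        Complex.ofReal_one, div_eq_mul_inv]
      ring
    simp_rw [e]
    rw [integral_const_mul, h]
    have : ((Real.Gamma (ρ * (k + 1)) : ℝ) : ℂ) ≠ 0 := Complex.ofReal_ne_zero.2 (hG k).ne'
    rw [Complex.ofReal_mul _ (Real.Gamma _)]
    field_simp
  have hHS := hasSum_integral_of_summable_integral_norm hFint hsum
  simp_rw [htsum, hval] at hHS
  have hI := hHS.unique (hasSum_laplaceKernel hρ₁ hs)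
  refine ⟨?_, hI⟩
  -- A non-integrable function would have integral `0`, while the kernel does not vanish.
  refine Integrable.of_integral_ne_zero ?_
  rw [hI, laplaceKernel]
  have hs' : s ≠ 0 := by rintro rfl; simp at hs0
  have hρ' : (ρ : ℂ) ≠ 0 := Complex.ofReal_ne_zero.2 (by linarith)
  have hp : s ^ ((ρ - 1 : ℝ) : ℂ) ≠ 0 := by simp [Complex.cpow_eq_zero_iff, hs']
  exact div_ne_zero (mul_ne_zero hρ' hp) (pow_ne_zero 2 (cpow_add_one_ne_zero hρ₁ hρ₂ hs0))

/-! ### Inversion and the bound -/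

/-- The Bromwich integral on the line `Re s = 2`: Fourier inversion applied to `g(t) e^{-2t}` on
`(0, ∞)`, extended by `0`, after the substitution `y = 2πw` accounting for the normalisation of the
Fourier transform. -/
theorem mlSum_eq_integral {ρ : ℝ} (hρ₁ : 1 < ρ) (hρ₂ : ρ < 2) {x : ℝ} (hx : 0 < x) :
    (mlSum ρ x : ℂ) = (2 * Real.pi : ℂ)⁻¹ * ∫ y : ℝ, Complex.exp (((2 : ℝ) + y * Complex.I) * x) *
      laplaceKernel ρ ((2 : ℝ) + y * Complex.I) := by
  have hπ := Real.pi_pos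
  obtain ⟨C, hC, hK⟩ := exists_norm_laplaceKernel_le hρ₁ hρ₂
  set h : ℝ → ℂ := (Ioi (0 : ℝ)).indicator
    fun t => (mlSum ρ t : ℂ) * Complex.exp (-((2 : ℂ) * t)) with hh
  have hint : Integrable h := by
    rw [hh, integrable_indicator_iff measurableSet_Ioi]
    exact (laplace_mlSum hρ₁ hρ₂ (s := 2) (by norm_num)).1
  have hFT : ∀ w : ℝ, FourierTransform.fourier h w =
      laplaceKernel ρ ((2 : ℝ) + (2 * Real.pi * w : ℝ) * Complex.I) := by
    intro w
    rw [Real.fourier_real_eq_integral_exp_smul, ← (laplace_mlSum hρ₁ hρ₂ (by simp)).2,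
      ← integral_indicator measurableSet_Ioi]
    refine integral_congr_ae (ae_of_all _ fun t => ?_)
    by_cases ht : t ∈ Ioi (0 : ℝ)
    · simp only [hh, indicator_of_mem ht, smul_eq_mul]
      rw [mul_left_comm, ← Complex.exp_add]
      congr 2
      push_cast
      ring
    · simp only [hh, indicator_of_notMem ht, smul_zero]
  have hcont : Continuous fun y : ℝ => laplaceKernel ρ ((2 : ℝ) + y * Complex.I) :=
    (laplaceKernel_differentiableOn hρ₁ hρ₂).continuousOn.comp_continuous (by fun_prop)
      fun y => by simp
  have hKint : Integrable fun y : ℝ => laplaceKernel ρ ((2 : ℝ) + y * Complex.I) := by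
    refine (integrable_inv_one_add_sq.const_mul C).mono' hcont.aestronglyMeasurable
      (ae_of_all _ fun y => ?_)
    simpa using hK ((2 : ℝ) + y * Complex.I) (by simp)
  have hFTint : Integrable (FourierTransform.fourier h) := by
    rw [funext hFT]
    exact hKint.comp_mul_left' (by positivity : (2 * Real.pi) ≠ 0)
  have hca : ContinuousAt h x := by
    have h1 : ContinuousAt (fun t : ℝ => (mlSum ρ t : ℂ) * Complex.exp (-((2 : ℂ) * t))) x :=
      (Complex.continuous_ofReal.continuousAt.comp (mlSum_continuousAt hρ₁ hx)).mul
        (by fun_prop)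
    refine h1.congr ?_
    filter_upwards [Ioi_mem_nhds hx] with t ht
    rw [hh, indicator_of_mem ht]
  have hinv := hint.fourierInv_fourier_eq hFTint hca
  rw [Real.fourierInv_eq', hh, indicator_of_mem (mem_Ioi.2 hx)] at hinv
  have hmul : (mlSum ρ x : ℂ) = Complex.exp (2 * x) *
      ((mlSum ρ x : ℂ) * Complex.exp (-((2 : ℂ) * x))) := by
    rw [mul_left_comm, ← Complex.exp_add]
    simp
  rw [hmul, ← hinv, ← integral_const_mul]
  have hsub := Measure.integral_comp_mul_left (fun y : ℝ =>
    Complex.exp (((2 : ℝ) + y * Complex.I) * x) * laplaceKernel ρ ((2 : ℝ) + y * Complex.I))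
    (2 * Real.pi)
  have habs : |(2 * Real.pi)⁻¹| = (2 * Real.pi)⁻¹ := abs_of_pos (by positivity)
  rw [habs, Complex.real_smul] at hsub
  push_cast at hsub ⊢
  rw [← hsub]
  refine integral_congr_ae (ae_of_all _ fun w => ?_)
  have := hFT w
  rw [hh] at this
  push_cast at this
  simp only [smul_eq_mul]
  rw [this, ← mul_assoc, ← Complex.exp_add]
  congr 2
  simp
  ring

/-- The line of integration is taken at `Re s = 1/x`, so that `‖exp (s * x)‖ = e` uniformly in `x`. -/
theorem exists_abs_mlSum_le {ρ : ℝ} (hρ₁ : 1 < ρ) (hρ₂ : ρ < 2) :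
    ∃ C : ℝ, 0 < C ∧ ∀ x : ℝ, 1 ≤ x → |mlSum ρ x| ≤ C := by
  have hπ := Real.pi_pos
  obtain ⟨C, hC, hK⟩ := exists_norm_laplaceKernel_le hρ₁ hρ₂
  refine ⟨(2 * Real.pi)⁻¹ * (Real.exp 1 * C * Real.pi), by positivity, fun x hx => ?_⟩
  have hx0 : 0 < x := by linarith
  have hF : ∀ s : ℂ, 0 < s.re → ‖Complex.exp (s * x) * laplaceKernel ρ s‖ ≤
      Real.exp (s.re * x) * (C * (1 + s.im ^ 2)⁻¹) := by
    intro s hs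
    rw [norm_mul, Complex.norm_exp]
    have := hK s hs
    simp only [Complex.mul_re, Complex.ofReal_re, Complex.ofReal_im, mul_zero, sub_zero]
    gcongr
  have hi : 0 < x⁻¹ := inv_pos.2 hx0
  have hshift := rect_shift (F := fun s => Complex.exp (s * x) * laplaceKernel ρ s)
    (a := x⁻¹) (b := 2) (C := Real.exp (2 * x) * C)
    ((inv_le_one_of_one_le₀ hx).trans one_le_two) ?_ ?_
  · rw [← Real.norm_eq_abs, ← Complex.norm_real, mlSum_eq_integral hρ₁ hρ₂ hx0, ← hshift,
      norm_mul]
    have hn : ‖(2 * Real.pi : ℂ)⁻¹‖ = (2 * Real.pi)⁻¹ := by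
      rw [norm_inv, norm_mul, Complex.norm_real, Real.norm_of_nonneg hπ.le]
      simp
    rw [hn]
    gcongr
    rw [← integral_univ_inv_one_add_sq, ← integral_const_mul]
    refine norm_integral_le_of_norm_le (integrable_inv_one_add_sq.const_mul _)
      (ae_of_all _ fun y => (hF _ (by simpa using hi)).trans_eq ?_)
    simp [hx0.ne', mul_assoc]
  · intro s hs
    have hs0 : 0 < s.re := hi.trans_le hs
    refine DifferentiableAt.differentiableWithinAt (.mul (by fun_prop) ?_)
    exact (laplaceKernel_differentiableOn hρ₁ hρ₂).differentiableAt
      ((isOpen_lt continuous_const Complex.continuous_re).mem_nhds hs0)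
  · intro s hs hs2
    refine (hF s (hi.trans_le hs)).trans ?_
    rw [← mul_assoc]
    gcongr

/-- For `1 < ρ < 2` there is a constant `M₃ > 0`, depending only on `ρ`, such that
`x^{ρ−1} |E_{ρ,ρ}(−x^ρ)| ≤ M₃/(1 + x)` for all `x > 0`; this bounds the derivative
of `x ↦ E_ρ(−x^ρ)`. -/
theorem mittagLeffler_deriv_bound (ρ : ℝ) (hρ₁ : 1 < ρ) (hρ₂ : ρ < 2) :
    ∃ M₃ : ℝ, 0 < M₃ ∧ ∀ x : ℝ, 0 < x →
      x ^ (ρ - 1) * |mittagLeffler2 ρ (-(x ^ ρ))| ≤ M₃ / (1 + x) := by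
  obtain ⟨B, hB, hsmall⟩ := exists_bound_small hρ₁
  obtain ⟨C, hC, hlarge⟩ := exists_abs_mlSum_le hρ₁ hρ₂
  refine ⟨2 * (B + C), by positivity, fun x hx => ?_⟩
  set f := x ^ (ρ - 1) * |mittagLeffler2 ρ (-(x ^ ρ))| with hf
  have hf0 : 0 ≤ f := by positivity
  rw [le_div_iff₀ (by linarith)]
  rcases le_total x 1 with h | h
  · nlinarith [hsmall x hx h]
  · have := hlarge x h
    rw [mlSum_eq hx, abs_mul, abs_mul, abs_of_pos hx,
      abs_of_nonneg (Real.rpow_nonneg hx.le _), ← hf] at this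
    nlinarith
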